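/- arXiv:math/0304302 — 2 statements merged into one kernel-verified Lean document; each statement's English description precedes it below -/
import Mathlib

section
/- Let G be a finite group acting on a finite set X. Then (1/|G|) · ∑_{(g,h)∈G×G, gh=hg} |X^g ∩ X^h| = ∑_{[g]} |X^g / C(g)|, where the right-hand sum runs over the conjugacy classes [g] of G, X^g denotes the fixed-point set of g, C(g) denotes the centralizer of g in G (which acts on X^g), and X^g/C(g) is the set of C(g)-orbits on X^g. -/
open MulAction in
/-- The fixed set of `g` as a sub-action of the centralizer. -/
def fixSub {G X : Type*} [Group G] [MulAction G X] (g : G) :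
    SubMulAction (Subgroup.centralizer {g}) X where
  carrier := fixedBy X g
  smul_mem' := by
    rintro ⟨c, hc⟩ x hx
    rw [Subgroup.mem_centralizer_singleton_iff] at hc
    simp only [mem_fixedBy, Subgroup.mk_smul] at hx ⊢
    rw [smul_smul, ← hc, ← smul_smul, hx]

open MulAction in
lemma card_quot {G X : Type*} [Group G] [MulAction G X] (g : G) :
    Nat.card (Quotient (orbitRel (Subgroup.centralizer {g}) (fixSub (X := X) g))) =
    (Quotient.mk (orbitRel (Subgroup.centralizer {g}) X) '' fixedBy X g).ncard := by
  have key : ∀ a b : fixSub (X := X) g,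
      (orbitRel (Subgroup.centralizer {g}) (fixSub (X := X) g)) a b ↔
      (orbitRel (Subgroup.centralizer {g}) X) a.1 b.1 := by
    intro a b
    rw [orbitRel_apply, orbitRel_apply]
    constructor
    · rintro ⟨c, rfl⟩
      exact ⟨c, rfl⟩
    · rintro ⟨c, hc⟩
      exact ⟨c, Subtype.ext hc⟩
  let f : Quotient (orbitRel (Subgroup.centralizer {g}) (fixSub (X := X) g)) →
      Quotient (orbitRel (Subgroup.centralizer {g}) X) :=
    Quotient.lift (fun a => Quotient.mk _ a.1) (fun a b h => Quotient.sound ((key a b).1 h))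
  have hf : Function.Injective f := by
    intro a b
    induction a using Quotient.inductionOn
    induction b using Quotient.inductionOn
    intro h
    exact Quotient.sound ((key _ _).2 (Quotient.exact h))
  have hr : Set.range f = Quotient.mk (orbitRel (Subgroup.centralizer {g}) X) '' fixedBy X g := by
    ext y
    constructor
    · rintro ⟨a, rfl⟩
      induction a using Quotient.inductionOn with
      | _ a => exact ⟨a.1, a.2, rfl⟩
    · rintro ⟨x, hx, rfl⟩
      exact ⟨Quotient.mk _ ⟨x, hx⟩, rfl⟩
  rw [← hr, ← Nat.card_coe_set_eq]
  exact Nat.card_congr (Equiv.ofInjective f hf)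

open MulAction in
lemma burn {G X : Type*} [Group G] [Fintype G] [DecidableEq G] [Fintype X] [MulAction G X]
    (g : G) :
    ∑ h : G, (if g * h = h * g then ((fixedBy X g ∩ fixedBy X h).ncard : ℚ) else 0) =
    (Nat.card (Subgroup.centralizer {g}) : ℚ) *
    ((Quotient.mk (orbitRel (Subgroup.centralizer {g}) X) '' fixedBy X g).ncard : ℚ) := by
  classical
  rw [← card_quot]
  have : Fintype (Subgroup.centralizer {g}) := Fintype.ofFinite _
  have : Fintype (fixSub (X := X) g) := Fintype.ofFinite _
  have : Fintype (Quotient (orbitRel (Subgroup.centralizer {g}) (fixSub (X := X) g))) :=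
    Fintype.ofFinite _
  have B := sum_card_fixedBy_eq_card_orbits_mul_card_group (Subgroup.centralizer {g})
    (fixSub (X := X) g)
  rw [mul_comm, Nat.card_eq_fintype_card, Nat.card_eq_fintype_card, ← Nat.cast_mul]
  rw [← B, Nat.cast_sum, ← Finset.sum_filter]
  rw [Finset.sum_subtype (p := fun h => h ∈ Subgroup.centralizer {g}) _
    (fun h => by simp [Subgroup.mem_centralizer_singleton_iff, eq_comm])]
  refine Finset.sum_congr rfl fun h _ => ?_
  congr 1
  rw [← Nat.card_eq_fintype_card, Nat.card_coe_set_eq,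
    ← Set.ncard_image_of_injective _ (Subtype.val_injective)]
  congr 1
  ext x
  constructor
  · rintro ⟨h1, h2⟩
    exact ⟨⟨x, h1⟩, Subtype.ext h2, rfl⟩
  · rintro ⟨y, h2, rfl⟩
    exact ⟨y.2, congrArg Subtype.val h2⟩

open MulAction in
lemma orb_conj_invariant {G X : Type*} [Group G] [Fintype G] [DecidableEq G] [Fintype X] [MulAction G X]
    (g k : G) :
    ∑ h : G, (if (k * g * k⁻¹) * h = h * (k * g * k⁻¹) then
      ((fixedBy X (k * g * k⁻¹) ∩ fixedBy X h).ncard : ℚ) else 0) =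
    ∑ h : G, (if g * h = h * g then ((fixedBy X g ∩ fixedBy X h).ncard : ℚ) else 0) := by
  symm
  refine Fintype.sum_equiv (MulAut.conj k).toEquiv _ _ fun h => ?_
  have h1 : (k * g * k⁻¹) * (k * h * k⁻¹) = (k * h * k⁻¹) * (k * g * k⁻¹) ↔ g * h = h * g := by
    rw [show (k * g * k⁻¹) * (k * h * k⁻¹) = k * (g * h) * k⁻¹ by group,
      show (k * h * k⁻¹) * (k * g * k⁻¹) = k * (h * g) * k⁻¹ by group]
    simp
  have h2 : fixedBy X (k * g * k⁻¹) ∩ fixedBy X (k * h * k⁻¹) =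
      (fun x => k • x) '' (fixedBy X g ∩ fixedBy X h) := by
    ext x
    constructor
    · rintro ⟨h1, h2⟩
      refine ⟨k⁻¹ • x, ⟨?_, ?_⟩, by simp⟩
      · simp only [mem_fixedBy, mul_smul] at h1 ⊢
        exact (eq_inv_smul_iff).2 h1
      · simp only [mem_fixedBy, mul_smul] at h2 ⊢
        exact (eq_inv_smul_iff).2 h2
    · rintro ⟨y, ⟨h1, h2⟩, rfl⟩
      simp only [mem_fixedBy] at h1 h2
      constructor <;> simp [mem_fixedBy, mul_smul, h1, h2]
  change _ = (if (k * g * k⁻¹) * (k * h * k⁻¹) = (k * h * k⁻¹) * (k * g * k⁻¹) then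
    ((fixedBy X (k * g * k⁻¹) ∩ fixedBy X (k * h * k⁻¹)).ncard : ℚ) else 0)
  rw [h2, Set.ncard_image_of_injective _ (MulAction.injective k)]
  simp only [h1]

lemma class_card {G : Type*} [Group G] [Fintype G] (g : G) :
    Nat.card (ConjClasses.mk g).carrier * Nat.card (Subgroup.centralizer {g}) = Nat.card G := by
  classical
  rw [Subgroup.nat_card_centralizer_nat_card_stabilizer,
    ← ConjAct.orbit_eq_carrier_conjClasses, ← Nat.card_prod]
  exact Nat.card_congr ((MulAction.orbitProdStabilizerEquivGroup (ConjAct G) g).trans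
    ConjAct.ofConjAct.toEquiv)

/- STATEMENT 2: For a finite group `G` acting on a finite set `X`,
`(1/|G|) · ∑_{gh=hg} |X^g ∩ X^h| = ∑_{[g]} |X^g / C(g)|`,
the right-hand sum running over conjugacy classes.

The quotient `X^g / C(g)` is encoded as the image of the fixed-point set
`X^g = MulAction.fixedBy X g` in the orbit space `X / C(g)` of the action of the
centralizer `C(g) = Subgroup.centralizer {g}` on `X`; since `X^g` is stable under
`C(g)`, this image is in bijection with the set of `C(g)`-orbits on `X^g`. -/
theorem orbifold_euler_characteristic_conj_classes
    (G X : Type*) [Group G] [Fintype G] [DecidableEq G] [Fintype X] [MulAction G X] :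
    (1 / (Nat.card G : ℚ)) *
        ∑ p : G × G,
          (if p.1 * p.2 = p.2 * p.1 then
            ((MulAction.fixedBy X p.1 ∩ MulAction.fixedBy X p.2).ncard : ℚ)
          else 0) =
      ∑ᶠ c : ConjClasses G,
        ((Quotient.mk (MulAction.orbitRel (Subgroup.centralizer {Quotient.out c}) X) ''
              MulAction.fixedBy X (Quotient.out c)).ncard : ℚ) := by
  classical
  have : Fintype (ConjClasses G) := Fintype.ofFinite _
  rw [finsum_eq_sum_of_fintype, Fintype.sum_prod_type,
    ← Finset.sum_fiberwise (s := Finset.univ) (g := fun g : G => ConjClasses.mk g), Finset.mul_sum]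
  refine Finset.sum_congr rfl fun c _ => ?_
  have hc : ConjClasses.mk (Quotient.out c) = c := Quotient.out_eq c
  rw [Finset.sum_congr rfl (g := fun _ => (Nat.card (Subgroup.centralizer {Quotient.out c}) : ℚ) *
    ((Quotient.mk (MulAction.orbitRel (Subgroup.centralizer {Quotient.out c}) X) ''
              MulAction.fixedBy X (Quotient.out c)).ncard : ℚ))]
  · have hG : (Nat.card G : ℚ) ≠ 0 := by simp
    have hcc := class_card (Quotient.out c)
    rw [hc] at hcc
    have hcard : (Finset.univ.filter fun g : G => ConjClasses.mk g = c).card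
        = Nat.card c.carrier := by
      rw [Nat.card_coe_set_eq, ← Set.ncard_coe_finset]
      congr 1
      ext x
      simp [ConjClasses.mem_carrier_iff_mk_eq]
    rw [Finset.sum_const, hcard, nsmul_eq_mul, ← mul_assoc, ← mul_assoc, mul_assoc (1 / _),
      ← Nat.cast_mul, hcc, one_div, inv_mul_cancel₀ hG, one_mul]
  · intro g hg
    rw [Finset.mem_filter] at hg
    have : IsConj (Quotient.out c) g := by
      rw [← ConjClasses.mk_eq_mk_iff_isConj, hc, hg.2]
    obtain ⟨k, rfl⟩ := isConj_iff.1 this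
    rw [← burn]
    exact orb_conj_invariant _ k
end

section
/- Let X be a set, let n ≥ 1, and let σ ∈ G_n be a permutation of cycle type α = (1^{a_1}, 2^{a_2}, …, n^{a_n}) (i.e. with a_i cycles of length i), acting on X^n by permuting coordinates. The centralizer C(σ) of σ in the symmetric group G_n acts on the fixed-point set (X^n)^σ, and the quotient (X^n)^σ / C(σ) is in natural bijection with the product ∏_{i=1}^{n} X^{(a_i)} of symmetric powers, where X^{(m)} := X^m / G_m denotes the m-th symmetric power of X. In particular, if X is a finite set with |X| = e, then |(X^n)^σ / C(σ)| = ∏_{i=1}^n C(e+a_i-1, a_i), where C(·,·) is the binomial coefficient. -/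
attribute [local instance] arrowAction

theorem aux_equiv {A Q B : Type*} (m : A → Q) (S : Set A) (F : S → B)
    (hF : ∀ x y : S, F x = F y ↔ m x = m y) (hs : Function.Surjective F) :
    Nonempty ((m '' S : Set Q) ≃ B) := by
  choose s hs using hs
  refine ⟨(Equiv.ofBijective (fun b => (⟨m (s b), (s b).1, (s b).2, rfl⟩ : (m '' S : Set Q)))
    ⟨?_, ?_⟩).symm⟩
  · intro b b' h
    have := (hF _ _).2 (congrArg Subtype.val h)
    rwa [hs, hs] at this
  · rintro ⟨_, x, hx, rfl⟩
    refine ⟨F ⟨x, hx⟩, Subtype.ext ?_⟩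
    exact (hF (s _) ⟨x, hx⟩).1 (hs _)

theorem aux_map_iff {S X : Type*} [Fintype S] (f g : S → X) :
    (Finset.univ : Finset S).val.map f = (Finset.univ : Finset S).val.map g ↔
      ∃ π : Equiv.Perm S, f = g ∘ π := by
  classical
  constructor
  · intro h
    have hc : ∀ x, Fintype.card {c // f c = x} = Fintype.card {c // g c = x} := by
      intro x
      have h1 := congrArg (Multiset.count x) h
      rw [Multiset.count_map, Multiset.count_map] at h1
      rw [Fintype.card_subtype, Fintype.card_subtype]
      simp only [eq_comm (a := x)] at h1
      exact h1
    refine ⟨Equiv.ofFiberEquiv (fun x => Fintype.equivOfCardEq (hc x)), ?_⟩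
    funext c
    exact (Equiv.ofFiberEquiv_map _ c).symm
  · rintro ⟨π, rfl⟩
    rw [← Multiset.map_map, Multiset.map_univ_val_equiv]

theorem aux_surj {S X : Type*} [Fintype S] (s : Multiset X) (h : s.card = Fintype.card S) :
    ∃ f : S → X, (Finset.univ.val.map f) = s := by
  have hl : s.toList.length = Fintype.card S := by simpa using h
  let e : S ≃ Fin s.toList.length := Fintype.equivFinOfCardEq hl.symm
  refine ⟨fun c => s.toList.get (e c), ?_⟩
  have h1 : (Finset.univ : Finset S).val.map e = (Finset.univ : Finset (Fin _)).val := by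
    exact Multiset.map_univ_val_equiv e
  have h2 : (Finset.univ.val.map (fun c => s.toList.get (e c)))
      = ((Finset.univ : Finset S).val.map e).map s.toList.get := by
    rw [Multiset.map_map]; rfl
  rw [h2, h1]
  have h3 : ((Finset.univ : Finset (Fin s.toList.length)).val.map s.toList.get)
      = ((List.ofFn s.toList.get : List X) : Multiset X) := by
    rw [Fin.univ_def, List.ofFn_eq_map]; rfl
  rw [h3, List.ofFn_get, Multiset.coe_toList]

/-- Lifting an orbit-length preserving injection on cycles to the centralizer. -/
theorem aux_lift {n : ℕ} (σ : Equiv.Perm (Fin n))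
    {Q : Type*} (q : Fin n → Q)
    (hq : ∀ i j, q i = q j ↔ ∃ k : ℤ, (σ ^ k) i = j)
    (hqs : Function.Surjective q)
    (p : Q → Q) (hp : Function.Injective p)
    (hlen : ∀ c, Nat.card {j // q j = p c} = Nat.card {j // q j = c}) :
    ∃ τ : Equiv.Perm (Fin n), τ * σ = σ * τ ∧ ∀ j, q (τ j) = p (q j) := by
  choose r hr using hqs
  have hper : ∀ (c : Q) (k : ℤ), (σ ^ k) (r c) = r c ↔ ((Nat.card {j // q j = c} : ℕ) : ℤ) ∣ k := by
    intro c k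
    have h1 := MulAction.zpow_smul_eq_iff_minimalPeriod_dvd (a := σ) (b := r c) (n := k)
    have h2 : Function.minimalPeriod (σ • ·) (r c) = Nat.card {j // q j = c} := by
      rw [← Nat.card_zmod (Function.minimalPeriod (σ • ·) (r c)),
        ← Nat.card_congr (MulAction.orbitZPowersEquiv σ (r c))]
      refine Nat.card_congr (Equiv.subtypeEquivRight ?_)
      intro j
      constructor
      · rintro ⟨⟨_, k, rfl⟩, rfl⟩
        rw [← hr c]
        exact ((hq _ _).2 ⟨k, by simp [hr]; rfl⟩).symm
      · intro h
        obtain ⟨k, hk⟩ := (hq (r c) j).1 (by rw [hr, h])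
        exact ⟨⟨σ ^ k, k, rfl⟩, hk⟩
    rw [h2] at h1
    exact h1
  have heq : ∀ (c : Q) (k l : ℤ), (σ ^ k) (r c) = (σ ^ l) (r c) ↔
      ((Nat.card {j // q j = c} : ℕ) : ℤ) ∣ k - l := by
    intro c k l
    rw [← hper, sub_eq_neg_add, zpow_add, zpow_neg, Equiv.Perm.mul_apply,
      Equiv.Perm.inv_eq_iff_eq]
  have hk : ∀ j, ∃ k : ℤ, (σ ^ k) (r (q j)) = j := fun j => (hq _ _).1 (hr _)
  choose k hk using hk
  have hqz : ∀ (l : ℤ) j, q ((σ ^ l) j) = q j := fun l j => ((hq _ _).2 ⟨l, rfl⟩).symm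
  let t : Fin n → Fin n := fun j => (σ ^ k j) (r (p (q j)))
  have ht : ∀ (c : Q) (l : ℤ), t ((σ ^ l) (r c)) = (σ ^ l) (r (p c)) := by
    intro c l
    have hqc : q ((σ ^ l) (r c)) = c := by rw [hqz, hr]
    have h1 := hk ((σ ^ l) (r c))
    simp only [t]
    rw [hqc] at h1 ⊢
    rw [heq] at h1 ⊢
    rwa [hlen]
  have hqt : ∀ j, q (t j) = p (q j) := by
    intro j; simp only [t]; rw [hqz, hr]
  have hinj : Function.Injective t := by
    intro i j h
    have h1 : q i = q j := hp (by rw [← hqt, ← hqt, h])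
    simp only [t] at h
    rw [← hk i, ← hk j, ← h1]
    rw [← h1, heq, hlen, ← heq] at h
    exact h
  refine ⟨Equiv.ofBijective t (Finite.injective_iff_bijective.1 hinj), ?_, hqt⟩
  ext j : 1
  change t (σ j) = σ (t j)
  conv_lhs => rw [← hk j]
  rw [← Equiv.Perm.mul_apply, ← zpow_one_add, ht, zpow_one_add]
  rfl

theorem fixed_point_quotient_equiv_symmetric_powers
    (X : Type*) (n : ℕ) (hn : 1 ≤ n) (σ : Equiv.Perm (Fin n)) (a : ℕ → ℕ)
    (ha : ∀ i : ℕ,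
      a i =
        Nat.card
          {c : Quotient (MulAction.orbitRel (Subgroup.zpowers σ) (Fin n)) //
            Nat.card
                {j : Fin n //
                  Quotient.mk (MulAction.orbitRel (Subgroup.zpowers σ) (Fin n)) j = c} =
              i}) :
    Nonempty
        ((Quotient.mk (MulAction.orbitRel (Subgroup.centralizer {σ}) (Fin n → X)) ''
            MulAction.fixedBy (Fin n → X) σ : Set _) ≃
          ((i : Fin n) → Sym X (a ((i : ℕ) + 1)))) ∧
      (∀ e : ℕ, Finite X → Nat.card X = e →
        (Quotient.mk (MulAction.orbitRel (Subgroup.centralizer {σ}) (Fin n → X)) ''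
              MulAction.fixedBy (Fin n → X) σ).ncard =
          ∏ i ∈ Finset.Icc 1 n, (e + a i - 1).choose (a i)) := by
  classical
  set R := MulAction.orbitRel (Subgroup.zpowers σ) (Fin n) with hR
  let q : Fin n → Quotient R := Quotient.mk R
  have hqs : Function.Surjective q := Quotient.mk_surjective
  have hq : ∀ i j, q i = q j ↔ ∃ k : ℤ, (σ ^ k) i = j := by
    intro i j
    rw [eq_comm]
    refine Quotient.eq.trans ?_
    rw [hR, MulAction.orbitRel_apply]
    constructor
    · rintro ⟨⟨_, k, rfl⟩, h⟩
      exact ⟨k, h⟩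
    · rintro ⟨k, h⟩
      exact ⟨⟨σ ^ k, k, rfl⟩, h⟩
  have hidx : ∀ c : Quotient R, ∃ i : Fin n, Nat.card {j // q j = c} = (i : ℕ) + 1 := by
    intro c
    have h1 : Nat.card {j // q j = c} ≤ n := by
      simpa using Nat.card_le_card_of_injective (Subtype.val : {j // q j = c} → Fin n)
        Subtype.val_injective
    have h2 : 0 < Nat.card {j // q j = c} := by
      obtain ⟨j, hj⟩ := hqs c
      have : Nonempty {j // q j = c} := ⟨⟨j, hj⟩⟩
      exact Nat.card_pos
    exact ⟨⟨Nat.card {j // q j = c} - 1, by omega⟩, by simp only; omega⟩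
  choose idx hidx using hidx
  have hidx' : ∀ c d, idx c = idx d ↔ Nat.card {j // q j = c} = Nat.card {j // q j = d} := by
    intro c d
    rw [hidx, hidx, Fin.ext_iff]; omega
  have : Fintype (Quotient R) := Fintype.ofFinite _
  have ha' : ∀ i : Fin n, Fintype.card {c // idx c = i} = a ((i : ℕ) + 1) := by
    intro i
    rw [ha, ← Nat.card_eq_fintype_card]
    refine Nat.card_congr (Equiv.subtypeEquivRight ?_)
    intro c
    have := hidx c
    change _ ↔ Nat.card {j // q j = c} = _
    rw [this, Fin.ext_iff]; omega
  choose r hr using hqs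
  have hfix : ∀ x ∈ MulAction.fixedBy (Fin n → X) σ, ∀ i j, q i = q j → x i = x j := by
    intro x hx i j hij
    obtain ⟨k, rfl⟩ := (hq i j).1 hij
    have h1 : σ ^ (-k) • x = x := by
      have : σ ∈ MulAction.stabilizer (Equiv.Perm (Fin n)) x := hx
      exact Subgroup.zpow_mem _ this (-k)
    have h2 := congrFun h1 i
    rw [← h2]
    change x ((σ ^ (-k))⁻¹ i) = _
    rw [zpow_neg, inv_inv]
  have hfix' : ∀ x ∈ MulAction.fixedBy (Fin n → X) σ, ∀ j, x (r (q j)) = x j :=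
    fun x hx j => hfix x hx _ _ (hr _)
  let F : MulAction.fixedBy (Fin n → X) σ → ((i : Fin n) → Sym X (a ((i : ℕ) + 1))) :=
    fun x i => ⟨(Finset.univ : Finset {c // idx c = i}).val.map (fun c => x.1 (r c.1)), by
      rw [Multiset.card_map, ← ha' i]; rfl⟩
  have hE := aux_equiv (Quotient.mk (MulAction.orbitRel (Subgroup.centralizer {σ}) (Fin n → X)))
    (MulAction.fixedBy (Fin n → X) σ) F ?_ ?_
  · refine ⟨hE, ?_⟩
    intro e hfin he
    obtain ⟨E⟩ := hE
    have : Fintype X := Fintype.ofFinite X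
    rw [← Nat.card_coe_set_eq, Nat.card_congr E, Nat.card_pi]
    rw [← Finset.Ico_add_one_right_eq_Icc, Finset.prod_Ico_eq_prod_range,
      Nat.add_sub_cancel, Finset.prod_range]
    refine Finset.prod_congr rfl fun i _ => ?_
    rw [Nat.card_eq_fintype_card, Sym.card_sym_eq_choose, ← Nat.card_eq_fintype_card, he,
      add_comm 1 (i : ℕ)]
  · intro x y
    have hmk : (Quotient.mk (MulAction.orbitRel (Subgroup.centralizer {σ}) (Fin n → X)) x.1 =
        Quotient.mk (MulAction.orbitRel (Subgroup.centralizer {σ}) (Fin n → X)) y.1) ↔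
        ∃ τ : Equiv.Perm (Fin n), τ * σ = σ * τ ∧ ∀ j, x.1 j = y.1 (τ j) := by
      refine Quotient.eq.trans ?_
      rw [MulAction.orbitRel_apply]
      constructor
      · rintro ⟨⟨τ, hτ⟩, h⟩
        have hτ' := Subgroup.mem_centralizer_singleton_iff.1 (inv_mem hτ)
        exact ⟨τ⁻¹, by first | exact hτ' | exact hτ'.symm, fun j => (congrFun h j).symm⟩
      · rintro ⟨τ, h1, h2⟩
        refine ⟨⟨τ⁻¹, inv_mem (Subgroup.mem_centralizer_singleton_iff.2
          (by first | exact h1 | exact h1.symm))⟩, ?_⟩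
        funext j
        change y.1 (τ⁻¹⁻¹ j) = _
        rw [inv_inv, h2]
    rw [hmk]
    constructor
    · intro h
      have h1 : ∀ i : Fin n, ∃ π : Equiv.Perm {c // idx c = i},
          (fun c : {c // idx c = i} => x.1 (r c.1)) =
            (fun c : {c // idx c = i} => y.1 (r c.1)) ∘ π := fun i =>
        (aux_map_iff _ _).1 (congrArg Subtype.val (congrFun h i))
      choose π hπ using h1
      let p : Quotient R → Quotient R := fun c => (π (idx c) ⟨c, rfl⟩).1
      have hp1 : ∀ c, idx (p c) = idx c := fun c => (π (idx c) ⟨c, rfl⟩).2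
      have hp2 : ∀ i (c : {c // idx c = i}), p c.1 = (π i c).1 := by
        rintro _ ⟨c, rfl⟩; rfl
      have hp3 : Function.Injective p := by
        intro c d hcd
        have hi : idx c = idx d := by rw [← hp1 c, hcd, hp1]
        have e1 := hp2 (idx d) ⟨c, hi⟩
        have e2 := hp2 (idx d) ⟨d, rfl⟩
        simp only at e1 e2
        rw [hcd, e2] at e1
        have := (π (idx d)).injective (Subtype.ext e1)
        exact (congrArg Subtype.val this).symm
      obtain ⟨τ, h1, h2⟩ := aux_lift σ q hq Quotient.mk_surjective p hp3
        (fun c => (hidx' _ _).1 (hp1 c))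
      refine ⟨τ, h1, fun j => ?_⟩
      rw [← hfix' x.1 x.2 j, ← hfix' y.1 y.2 (τ j), h2]
      exact congrFun (hπ (idx (q j))) ⟨q j, rfl⟩
    · rintro ⟨τ, h1, h2⟩
      have hc : ∀ k : ℤ, ∀ j, τ ((σ ^ k) j) = (σ ^ k) (τ j) := by
        intro k j
        have : Commute τ (σ ^ k) := Commute.zpow_right h1 k
        exact congrArg (fun f : Equiv.Perm (Fin n) => f j) this.eq
      have hqτ : ∀ i j, q (τ i) = q (τ j) ↔ q i = q j := by
        intro i j
        rw [hq, hq]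
        refine exists_congr fun k => ?_
        rw [← hc, τ.injective.eq_iff]
      let p : Quotient R → Quotient R := fun c => q (τ (r c))
      have hpq : ∀ j, p (q j) = q (τ j) := fun j => (hqτ _ _).2 (hr _)
      have hpi : Function.Injective p := by
        intro c d hcd
        rw [← hr c, ← hr d]
        exact (hqτ _ _).1 hcd
      have hpl : ∀ c, idx (p c) = idx c := by
        intro c
        rw [hidx']
        refine (Nat.card_congr (Equiv.subtypeEquiv τ ?_)).symm
        intro j
        rw [← hpq, hpi.eq_iff]
      funext i
      apply Subtype.ext
      refine (aux_map_iff _ _).2 ?_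
      refine ⟨Equiv.ofBijective (fun c => ⟨p c.1, (hpl _).trans c.2⟩)
        (Finite.injective_iff_bijective.1 ?_), ?_⟩
      · intro c d hcd
        exact Subtype.ext (hpi (congrArg Subtype.val hcd))
      · funext c
        change x.1 (r c.1) = y.1 (r (q (τ (r c.1))))
        rw [hfix' y.1 y.2, h2]
  · intro s
    have h1 : ∀ i : Fin n, ∃ f : {c // idx c = i} → X, Finset.univ.val.map f = (s i).1 :=
      fun i => aux_surj _ (by rw [ha' i]; exact (s i).2)
    choose f hf using h1
    refine ⟨⟨fun j => f (idx (q j)) ⟨q j, rfl⟩, ?_⟩, ?_⟩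
    · funext j
      have : q (σ⁻¹ j) = q j := (hq _ _).2 ⟨1, by simp⟩
      change f (idx (q (σ⁻¹ j))) ⟨q (σ⁻¹ j), rfl⟩ = f (idx (q j)) ⟨q j, rfl⟩
      rw [this]
    · funext i
      apply Subtype.ext
      rw [← hf i]
      refine Multiset.map_congr rfl ?_
      rintro ⟨c, rfl⟩ -
      change f (idx (q (r c))) ⟨q (r c), rfl⟩ = _
      rw [hr c]
end
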